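/- With the apparatus fixed, let a and b be integers with 1 ≤ a < b, put H = 15(b−a), and suppose that b + H ≤ (2θ)^{−1}. Then there exist an integer h with 0 ≤ h < H and a constant C depending at most on s, k, r, t, N such that I_{a,b}(X) ≤ C((M^h)^{2s/3}·K_{a,b+h}(X) + (M^H)^{−s/4}·(X/M^b)^{2s}·(X/M^a)^{λ−2s}). -/

import Mathlib

open Filter MeasureTheory Finset

attribute [local instance] Classical.propDecidable

noncomputable section

/-- Number of integral solutions of the Vinogradov system of degree k
in 2s variables from [1,X]. -/
def Jcount (s k : ℕ) (X : ℝ) : ℕ :=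
  Set.ncard {xy : (Fin s → ℤ) × (Fin s → ℤ) |
    (∀ i, 1 ≤ xy.1 i ∧ (xy.1 i : ℝ) ≤ X) ∧
    (∀ i, 1 ≤ xy.2 i ∧ (xy.2 i : ℝ) ≤ X) ∧
    ∀ j ∈ Finset.Icc 1 k, ∑ i, ((xy.1 i) ^ j - (xy.2 i) ^ j) = 0}

/-- e(z) = exp(2πiz). -/
def ec (z : ℝ) : ℂ := Complex.exp (2 * Real.pi * Complex.I * z)

/-- The unit box [0,1)^k. -/
def box (k : ℕ) : Set (Fin k → ℝ) := Set.univ.pi fun _ => Set.Ico (0:ℝ) 1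

/-- The exponential sum f_c(α;ξ), over 1 ≤ x ≤ X with x ≡ ξ (mod p^c). -/
def fexp (k p : ℕ) (X : ℝ) (c : ℕ) (ξ : ℤ) (α : Fin k → ℝ) : ℂ :=
  ∑ x ∈ (Finset.Icc (1:ℤ) ⌊X⌋).filter (fun x => Int.ModEq ((p:ℤ)^c) x ξ),
    ec (∑ j : Fin k, α j * (x:ℝ)^((j:ℕ)+1))

/-- The set Ξ_c^r(ξ): r-tuples in [1,p^{c+1}], congruent to ξ mod p^c,
pairwise distinct mod p^{c+1}. -/
def XiSet (p r c : ℕ) (ξ : ℤ) : Set (Fin r → ℤ) :=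
  {v | (∀ i, 1 ≤ v i ∧ v i ≤ (p:ℤ)^(c+1)) ∧
       (∀ i, Int.ModEq ((p:ℤ)^c) (v i) ξ) ∧
       Function.Injective fun i => ((v i : ZMod (p^(c+1))))}

/-- The conditioned exponential sum F_c(α;ξ). -/
def Fexp (k p r : ℕ) (X : ℝ) (c : ℕ) (ξ : ℤ) (α : Fin k → ℝ) : ℂ :=
  ∑ᶠ v ∈ XiSet p r c ξ, ∏ i, fexp k p X (c+1) (v i) α

/-- The mean value I_{a,b}(X;ξ,η). -/
def Iab (k p r s : ℕ) (X : ℝ) (a b : ℕ) (ξ η : ℤ) : ℝ :=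
  ∫ α in box k, ‖Fexp k p r X a ξ α‖^2 * ‖fexp k p X b η α‖^(2*s)

/-- The mean value K_{a,b}(X;ξ,η). -/
def Kab (k p r t : ℕ) (X : ℝ) (a b : ℕ) (ξ η : ℤ) : ℝ :=
  ∫ α in box k, ‖Fexp k p r X a ξ α‖^2 * ‖Fexp k p r X b η α‖^(2*t)

/-- I_{a,b}(X): the maximum of I_{a,b}(X;ξ,η) over admissible ξ, η. -/
def Imax (k p r s : ℕ) (X : ℝ) (a b : ℕ) : ℝ :=
  sSup {v : ℝ | ∃ ξ η : ℤ, 1 ≤ ξ ∧ ξ ≤ (p:ℤ)^a ∧ 1 ≤ η ∧ η ≤ (p:ℤ)^b ∧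
    ¬ Int.ModEq (p:ℤ) η ξ ∧ v = Iab k p r s X a b ξ η}

/-- The set Ξ(η) of members of Ξ_0^r(0) avoiding the class of η mod p. -/
def XiTilde (p r : ℕ) (η : ℤ) : Set (Fin r → ℤ) :=
  {v | v ∈ XiSet p r 0 0 ∧ ∀ i, ¬ Int.ModEq (p:ℤ) (v i) η}

/-- The pre-conditioned sum F(α;η). -/
def Ftilde (k p r : ℕ) (X : ℝ) (η : ℤ) (α : Fin k → ℝ) : ℂ :=
  ∑ᶠ v ∈ XiTilde p r η, ∏ i, fexp k p X 1 (v i) α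

/-- The mean value K̃_c(X;η). -/
def Ktilde (k p r t : ℕ) (X : ℝ) (c : ℕ) (η : ℤ) : ℝ :=
  ∫ α in box k, ‖Ftilde k p r X η α‖^2 * ‖Fexp k p r X c η α‖^(2*t)

/-- K_{a,b}(X): for a ≥ 1 the maximum of K_{a,b}(X;ξ,η) over admissible ξ, η;
for a = 0 the pre-congruencing quantity K_{0,b}(X) = max_η K̃_b(X;η). -/
def Kmax (k p r t : ℕ) (X : ℝ) (a b : ℕ) : ℝ :=
  if a = 0 then sSup {v : ℝ | ∃ η : ℤ, 1 ≤ η ∧ η ≤ (p:ℤ)^b ∧ v = Ktilde k p r t X b η}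
  else sSup {v : ℝ | ∃ ξ η : ℤ, 1 ≤ ξ ∧ ξ ≤ (p:ℤ)^a ∧ 1 ≤ η ∧ η ≤ (p:ℤ)^b ∧
    ¬ Int.ModEq (p:ℤ) η ξ ∧ v = Kab k p r t X a b ξ η}

/-- λ = limsup_{Y→∞} log J_{sr,k}(Y)/log Y. -/
def lamExp (k sr : ℕ) : ℝ :=
  Filter.limsup (fun Y : ℝ => Real.log ((Jcount sr k Y : ℝ)) / Real.log Y) Filter.atTop

/-- θ = (16t)^{-N-1}. -/
def thetaC (t N : ℕ) : ℝ := (16*(t:ℝ)) ^ (-((N:ℝ)+1))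

/-- δ = θ/(1000 N t^N). -/
def deltaC (t N : ℕ) : ℝ := thetaC t N / (1000 * (N:ℝ) * (t:ℝ)^N)

/-- M = X^θ. -/
def Mval (t N : ℕ) (X : ℝ) : ℝ := X ^ thetaC t N

/-- κ = r(t+1) - (1/2)(t+r-k)(t+r-k-1+(2r-2)/(t-1)). -/
def kappa (k r t : ℕ) : ℝ :=
  (r : ℝ) * ((t : ℝ) + 1) -
    (1/2) * ((t : ℝ) + r - k) * ((t : ℝ) + r - k - 1 + (2*(r:ℝ) - 2)/((t:ℝ) - 1))

/-- Λ = λ - 2(s+r) + κ, with s = rt. -/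
def LamC (k r t : ℕ) : ℝ := lamExp k (r*(t+1)) - 2*((r*(t+1) : ℕ) : ℝ) + kappa k r t

/-- The normalised mean value ⟦K_{a,b}(X)⟧ = K_{a,b}(X) (X/M^b)^{-2s} (X/M^a)^{κ-2r}. -/
def normK (k p r t N : ℕ) (X : ℝ) (a b : ℕ) : ℝ :=
  Kmax k p r t X a b * (X / (Mval t N X)^b) ^ (-(2*((r*t : ℕ):ℝ))) *
    (X / (Mval t N X)^a) ^ (kappa k r t - 2*(r:ℝ))

/-- μ = (1/2)(t+r-k)(t+r-k-1). -/
def muC (k r t : ℕ) : ℝ := (1/2) * ((t:ℝ)+r-k) * ((t:ℝ)+r-k-1)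

/-- ν = (1/2)(t+r-k)(k+r-t-1). -/
def nuC (k r t : ℕ) : ℝ := (1/2) * ((t:ℝ)+r-k) * ((k:ℝ)+r-t-1)


/-- The character `α ↦ e(α · v)` attached to an integer vector. -/
def trigChar (k : ℕ) (v : Fin k → ℤ) (α : Fin k → ℝ) : ℂ := ec (∑ j, α j * (v j : ℝ))

lemma ec_add (x y : ℝ) : ec (x + y) = ec x * ec y := by
  simp only [ec, ← Complex.exp_add]
  push_cast
  ring_nf

lemma ec_zero : ec 0 = 1 := by simp [ec]

lemma star_ec (x : ℝ) : star (ec x) = ec (-x) := by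
  simp only [ec, Complex.star_def, ← Complex.exp_conj]
  simp [Complex.conj_ofNat]

lemma continuous_ec : Continuous ec := by
  unfold ec
  fun_prop

lemma trigChar_zero (k : ℕ) : trigChar k 0 = 1 := by
  ext α
  simp [trigChar, ec_zero]

lemma trigChar_add (k : ℕ) (v w : Fin k → ℤ) :
    trigChar k (v + w) = trigChar k v * trigChar k w := by
  ext α
  simp [trigChar, ← ec_add, mul_add, Finset.sum_add_distrib]

lemma star_trigChar (k : ℕ) (v : Fin k → ℤ) : star (trigChar k v) = trigChar k (-v) := by
  ext α
  simp [trigChar, star_ec]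

lemma trigChar_sum {ι : Type*} (k : ℕ) (s : Finset ι) (v : ι → Fin k → ℤ) :
    trigChar k (∑ i ∈ s, v i) = ∏ i ∈ s, trigChar k (v i) := by
  induction s using Finset.induction_on with
  | empty => simp [trigChar_zero]
  | insert i s hi ih => rw [Finset.sum_insert hi, Finset.prod_insert hi, trigChar_add, ih]

lemma continuous_trigChar (k : ℕ) (v : Fin k → ℤ) : Continuous (trigChar k v) := by
  unfold trigChar
  exact continuous_ec.comp (by fun_prop)

lemma integral_Ico_ec (n : ℤ) :
    ∫ x in Set.Ico (0 : ℝ) 1, ec (x * n) = if n = 0 then 1 else 0 := by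
  split_ifs with hn
  · simp [hn, ec_zero]
  · rw [integral_Ico_eq_integral_Ioc, ← intervalIntegral.integral_of_le zero_le_one]
    have hc : (2 * Real.pi * Complex.I * n : ℂ) ≠ 0 := by
      simp [Real.pi_ne_zero, hn]
    have h1 : ∀ x : ℝ, ec (x * n) = Complex.exp ((2 * Real.pi * Complex.I * n) * x) := by
      intro x
      simp only [ec]
      push_cast
      ring_nf
    simp_rw [h1]
    rw [integral_exp_mul_complex hc]
    have h2 : Complex.exp (2 * Real.pi * Complex.I * n) = 1 := by
      rw [Complex.exp_eq_one_iff]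
      exact ⟨n, by ring⟩
    simp [h2]

lemma integral_trigChar (k : ℕ) (v : Fin k → ℤ) :
    ∫ α in box k, trigChar k v α = if v = 0 then 1 else 0 := by
  have h1 : ∀ α, trigChar k v α = ∏ j, ec (α j * (v j : ℝ)) := by
    intro α
    simp only [trigChar]
    induction (Finset.univ : Finset (Fin k)) using Finset.induction_on with
    | empty => simp [ec_zero]
    | insert i s hi ih => rw [Finset.sum_insert hi, Finset.prod_insert hi, ec_add, ih]
  simp_rw [h1]
  rw [_root_.box, volume_pi, Measure.restrict_pi_pi,
    integral_fintype_prod_eq_prod (f := fun j x => ec (x * (v j : ℝ)))]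
  simp_rw [integral_Ico_ec]
  rw [Finset.prod_ite_zero]
  simp [funext_iff]

/-- The trigonometric polynomials with nonnegative integral coefficients. -/
def posTrig (k : ℕ) : Subsemiring ((Fin k → ℝ) → ℂ) :=
  Subsemiring.closure (Set.range (trigChar k))

lemma trigChar_mem_posTrig (k : ℕ) (v : Fin k → ℤ) : trigChar k v ∈ posTrig k :=
  Subsemiring.subset_closure ⟨v, rfl⟩

lemma star_mem_posTrig {k : ℕ} {g : (Fin k → ℝ) → ℂ} (hg : g ∈ posTrig k) :
    star g ∈ posTrig k := by
  induction hg using Subsemiring.closure_induction with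
  | mem x hx =>
    obtain ⟨v, rfl⟩ := hx
    rw [star_trigChar]
    exact trigChar_mem_posTrig k _
  | zero => simp
  | one => simp
  | add x y _ _ hx hy => simpa using add_mem hx hy
  | mul x y _ _ hx hy => simpa [mul_comm] using mul_mem hx hy

lemma continuous_of_mem_posTrig {k : ℕ} {g : (Fin k → ℝ) → ℂ} (hg : g ∈ posTrig k) :
    Continuous g := by
  induction hg using Subsemiring.closure_induction with
  | mem x hx =>
    obtain ⟨v, rfl⟩ := hx
    exact continuous_trigChar k v
  | zero => exact continuous_zero
  | one => exact continuous_one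
  | add x y _ _ hx hy => exact hx.add hy
  | mul x y _ _ hx hy => exact hx.mul hy

lemma integrableOn_box {E : Type*} [NormedAddCommGroup E] {k : ℕ} {g : (Fin k → ℝ) → E}
    (hg : Continuous g) : IntegrableOn g (box k) := by
  have hc : IsCompact (Set.Icc (0 : Fin k → ℝ) 1) := isCompact_Icc
  refine (hg.continuousOn.integrableOn_compact hc).mono_set ?_
  intro α hα
  simp only [_root_.box, Set.mem_univ_pi, Set.mem_Ico] at hα
  exact ⟨fun i => (hα i).1, fun i => (hα i).2.le⟩

lemma integral_re_nonneg_of_mem_posTrig {k : ℕ} {g : (Fin k → ℝ) → ℂ} (hg : g ∈ posTrig k) :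
    0 ≤ ∫ α in box k, (g α).re := by
  have hrange : (Submonoid.closure (Set.range (trigChar k)) : Set ((Fin k → ℝ) → ℂ)) =
      Set.range (trigChar k) := by
    let S : Submonoid ((Fin k → ℝ) → ℂ) :=
      { carrier := Set.range (trigChar k)
        one_mem' := ⟨0, trigChar_zero k⟩
        mul_mem' := by
          rintro _ _ ⟨v, rfl⟩ ⟨w, rfl⟩
          exact ⟨v + w, trigChar_add k v w⟩ }
    exact congrArg (fun T : Submonoid _ => (T : Set ((Fin k → ℝ) → ℂ))) (Submonoid.closure_eq S)
  rw [posTrig, Subsemiring.mem_closure_iff, hrange] at hg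
  suffices h : Continuous g ∧ 0 ≤ ∫ α in box k, (g α).re from h.2
  induction hg using AddSubmonoid.closure_induction with
  | mem x hx =>
    obtain ⟨v, rfl⟩ := hx
    refine ⟨continuous_trigChar k v, ?_⟩
    have h := integral_re (𝕜 := ℂ) (integrableOn_box (continuous_trigChar k v))
    simp only [RCLike.re_to_complex] at h
    rw [h, integral_trigChar]
    split_ifs <;> simp
  | zero => exact ⟨continuous_zero, by simp⟩
  | add x y _ _ hx hy =>
    refine ⟨hx.1.add hy.1, ?_⟩
    simp only [Pi.add_apply, Complex.add_re]
    have h := integral_add (integrableOn_box (Complex.continuous_re.comp hx.1))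
      (integrableOn_box (Complex.continuous_re.comp hy.1))
    simp only [Function.comp_apply] at h
    rw [h]
    exact add_nonneg hx.2 hy.2

/-- The vector `(x, x², …, x^k)`. -/
def powVec (k : ℕ) (x : ℤ) : Fin k → ℤ := fun j => x ^ ((j : ℕ) + 1)

lemma fexp_eq_sum_trigChar (k p : ℕ) (X : ℝ) (c : ℕ) (ξ : ℤ) :
    fexp k p X c ξ = ∑ x ∈ (Finset.Icc (1 : ℤ) ⌊X⌋).filter (fun x => Int.ModEq ((p : ℤ) ^ c) x ξ),
      trigChar k (powVec k x) := by
  ext α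
  simp [fexp, trigChar, powVec, Finset.sum_apply]

lemma fexp_mem_posTrig (k p : ℕ) (X : ℝ) (c : ℕ) (ξ : ℤ) : fexp k p X c ξ ∈ posTrig k := by
  rw [fexp_eq_sum_trigChar]
  exact sum_mem fun x _ => trigChar_mem_posTrig k _

lemma finite_Jcount_set (s k : ℕ) (X : ℝ) :
    {xy : (Fin s → ℤ) × (Fin s → ℤ) |
      (∀ i, 1 ≤ xy.1 i ∧ (xy.1 i : ℝ) ≤ X) ∧
      (∀ i, 1 ≤ xy.2 i ∧ (xy.2 i : ℝ) ≤ X) ∧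
      ∀ j ∈ Finset.Icc 1 k, ∑ i, ((xy.1 i) ^ j - (xy.2 i) ^ j) = 0}.Finite := by
  refine ((Set.finite_Icc (1 : Fin s → ℤ) (fun _ => ⌊X⌋)).prod
    (Set.finite_Icc (1 : Fin s → ℤ) (fun _ => ⌊X⌋))).subset ?_
  rintro ⟨x, y⟩ ⟨hx, hy, -⟩
  exact ⟨⟨fun i => (hx i).1, fun i => Int.le_floor.2 (hx i).2⟩,
    ⟨fun i => (hy i).1, fun i => Int.le_floor.2 (hy i).2⟩⟩

lemma Jcount_mono (s k : ℕ) {X Y : ℝ} (h : X ≤ Y) : Jcount s k X ≤ Jcount s k Y := by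
  refine Set.ncard_le_ncard ?_ (finite_Jcount_set s k Y)
  rintro ⟨x, y⟩ ⟨hx, hy, h0⟩
  exact ⟨fun i => ⟨(hx i).1, (hx i).2.trans h⟩, fun i => ⟨(hy i).1, (hy i).2.trans h⟩, h0⟩

lemma floor_pow_le_Jcount (s k n : ℕ) : n ^ s ≤ Jcount s k n := by
  have h : (Fintype.piFinset fun _ : Fin s => Finset.Icc (1 : ℤ) n).card = n ^ s := by
    simp
  rw [← h, ← Set.ncard_coe_finset]
  refine Set.ncard_le_ncard_of_injOn (fun x => (x, x)) ?_ ?_ (finite_Jcount_set s k n)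
  · intro x hx
    simp only [Finset.mem_coe, Fintype.mem_piFinset, Finset.mem_Icc] at hx
    exact ⟨fun i => ⟨(hx i).1, by exact_mod_cast (hx i).2⟩,
      fun i => ⟨(hx i).1, by exact_mod_cast (hx i).2⟩, by simp⟩
  · intro x _ y _ hxy
    exact (Prod.ext_iff.1 hxy).1

/-- Translation invariance of the Vinogradov system. -/
lemma sum_sub_pow_eq_zero {ι : Type*} [Fintype ι] {k : ℕ} {x y : ι → ℤ}
    (h : ∀ j ≤ k, ∑ i, (x i ^ j - y i ^ j) = 0) (z : ℤ) {j : ℕ} (hj : j ≤ k) :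
    ∑ i, ((x i - z) ^ j - (y i - z) ^ j) = 0 := by
  have h1 : ∀ i, (x i - z) ^ j - (y i - z) ^ j =
      ∑ m ∈ Finset.range (j + 1), (-z) ^ (j - m) * (j.choose m) * (x i ^ m - y i ^ m) := by
    intro i
    rw [sub_eq_add_neg (x i), sub_eq_add_neg (y i), add_pow, add_pow, ← Finset.sum_sub_distrib]
    exact Finset.sum_congr rfl fun m _ => by ring
  simp_rw [h1]
  rw [Finset.sum_comm]
  refine Finset.sum_eq_zero fun m hm => ?_
  rw [← Finset.mul_sum, h m (by have := Finset.mem_range.1 hm; omega), mul_zero]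

lemma norm_pow_two_mul (z : ℂ) (n : ℕ) : ‖z‖ ^ (2 * n) = (z ^ n * star z ^ n).re := by
  rw [← mul_pow, Complex.star_def, Complex.mul_conj, Complex.normSq_eq_norm_sq, pow_mul,
    ← Complex.ofReal_pow, Complex.ofReal_re]

lemma integral_fexp_pow_eq_card (k p u : ℕ) (X : ℝ) (c : ℕ) (ξ : ℤ)
    (S : Finset ℤ)
    (hS : S = (Finset.Icc (1 : ℤ) ⌊X⌋).filter (fun x => Int.ModEq ((p : ℤ) ^ c) x ξ)) :
    ∫ α in box k, ‖fexp k p X c ξ α‖ ^ (2 * u) =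
      ((Finset.univ : Finset ((Fin u → S) × (Fin u → S))).filter
        (fun v => ∑ i, powVec k (v.1 i) - ∑ i, powVec k (v.2 i) = 0)).card := by
  have hpow : fexp k p X c ξ ^ u =
      ∑ x : Fin u → S, trigChar k (∑ i, powVec k (x i)) := by
    rw [fexp_eq_sum_trigChar, ← hS, ← Finset.sum_coe_sort, Fintype.sum_pow]
    simp_rw [trigChar_sum]
  have hexp : ∀ α, fexp k p X c ξ α ^ u * star (fexp k p X c ξ α) ^ u =
      ∑ v : (Fin u → S) × (Fin u → S),
        trigChar k (∑ i, powVec k (v.1 i) - ∑ i, powVec k (v.2 i)) α := by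
    intro α
    have h : fexp k p X c ξ ^ u * star (fexp k p X c ξ ^ u) =
        ∑ v : (Fin u → S) × (Fin u → S),
          trigChar k (∑ i, powVec k (v.1 i) - ∑ i, powVec k (v.2 i)) := by
      rw [hpow, star_sum, Finset.sum_mul_sum, Fintype.sum_prod_type]
      simp_rw [star_trigChar, ← trigChar_add, sub_eq_add_neg]
    simpa [Finset.sum_apply] using congrFun h α
  simp_rw [norm_pow_two_mul, hexp]
  have hint : ∀ v ∈ (Finset.univ : Finset ((Fin u → S) × (Fin u → S))),
      Integrable (fun α => trigChar k (∑ i, powVec k (v.1 i) - ∑ i, powVec k (v.2 i)) α)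
        (volume.restrict (box k)) := fun v _ => integrableOn_box (continuous_trigChar k _)
  have hre := integral_re (𝕜 := ℂ) (integrable_finsetSum _ hint)
  simp only [RCLike.re_to_complex] at hre
  rw [hre, integral_finsetSum _ hint]
  simp_rw [integral_trigChar]
  simp

/-- Translation-dilation invariance bounds the mean value over a residue class. -/
lemma integral_fexp_pow_le_Jcount (k p u : ℕ) (hp : 0 < p) (X : ℝ) (c : ℕ) (ξ : ℤ) :
    ∫ α in box k, ‖fexp k p X c ξ α‖ ^ (2 * u) ≤ Jcount u k (X / (p : ℝ) ^ c + 1) := by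
  set S := (Finset.Icc (1 : ℤ) ⌊X⌋).filter (fun x => Int.ModEq ((p : ℤ) ^ c) x ξ) with hS
  rw [integral_fexp_pow_eq_card k p u X c ξ S hS, ← Set.ncard_coe_finset]
  have hq : (0 : ℤ) < (p : ℤ) ^ c := by positivity
  set q : ℤ := (p : ℤ) ^ c with hqdef
  have hqR : (q : ℝ) = (p : ℝ) ^ c := by simp [hqdef]
  set z : ℤ := -((-ξ) % q) with hz
  have hz0 : z ≤ 0 := by have := Int.emod_nonneg (-ξ) hq.ne'; omega
  have hz1 : -q < z := by have := Int.emod_lt_of_pos (-ξ) hq; omega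
  have hdvd : ∀ x : S, q ∣ (x : ℤ) - z := by
    intro x
    have h1 := (Finset.mem_filter.1 x.2).2
    have h2 : q ∣ z - ξ := by
      have h4 : -((-ξ) % q) - ξ = q * ((-ξ) / q) := by
        have := Int.emod_add_mul_ediv (-ξ) q
        linarith
      rw [hz, h4]
      exact dvd_mul_right _ _
    have h3 : q ∣ (x : ℤ) - ξ := h1.symm.dvd
    have := dvd_sub h3 h2
    simpa using this
  let g : S → ℤ := fun x => ((x : ℤ) - z) / q
  have hg : ∀ x : S, q * g x = (x : ℤ) - z := fun x => Int.mul_ediv_cancel' (hdvd x)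
  have hg1 : ∀ x : S, 1 ≤ g x ∧ (g x : ℝ) ≤ X / (p : ℝ) ^ c + 1 := by
    intro x
    have hx := Finset.mem_Icc.1 (Finset.mem_filter.1 x.2).1
    constructor
    · by_contra! h
      have h0 : g x ≤ 0 := by omega
      have := hg x
      nlinarith
    · have hxX : ((x : ℤ) : ℝ) ≤ X := (Int.cast_le.2 hx.2).trans (Int.floor_le X)
      have h1 : (q : ℝ) * g x = (x : ℤ) - z := by exact_mod_cast hg x
      have hqR0 : (0 : ℝ) < q := by exact_mod_cast hq
      have hz1R : -(q : ℝ) < z := by exact_mod_cast hz1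
      rw [← hqR, div_add_one hqR0.ne', le_div_iff₀ hqR0]
      linarith
  have hginj : Function.Injective g := by
    intro x y hxy
    have h1 := hg x
    have h2 := hg y
    rw [hxy] at h1
    exact Subtype.ext (by linarith)
  rw [Nat.cast_le]
  refine Set.ncard_le_ncard_of_injOn (fun v => (fun i => g (v.1 i), fun i => g (v.2 i))) ?_ ?_
    (finite_Jcount_set u k _)
  · intro v hv
    simp only [Finset.coe_filter, Finset.mem_univ, true_and, Set.mem_ofPred_eq] at hv
    refine ⟨fun i => hg1 _, fun i => hg1 _, fun j hj => ?_⟩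
    have hsum : ∀ j ≤ k, ∑ i, ((v.1 i : ℤ) ^ j - (v.2 i : ℤ) ^ j) = 0 := by
      intro j hj
      rcases Nat.eq_zero_or_pos j with rfl | hj0
      · simp
      · have h := congrFun hv ⟨j - 1, by omega⟩
        simp only [powVec, Pi.sub_apply, Finset.sum_apply, Pi.zero_apply,
          Nat.sub_add_cancel hj0] at h
        rwa [Finset.sum_sub_distrib]
    have h1 := sum_sub_pow_eq_zero hsum z (Finset.mem_Icc.1 hj).2
    simp_rw [← hg, mul_pow, ← mul_sub, ← Finset.mul_sum] at h1
    exact (mul_eq_zero.1 h1).resolve_left (pow_ne_zero _ hq.ne')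
  · intro v _ w _ hvw
    have h1 := Prod.ext_iff.1 hvw
    exact Prod.ext (funext fun i => hginj (congrFun h1.1 i))
      (funext fun i => hginj (congrFun h1.2 i))

/-- The residues modulo `p ^ (c + 1)` lifting the class of `ξ` modulo `p ^ c`. -/
def residueLifts (p c : ℕ) (ξ : ℤ) : Finset ℤ :=
  (Finset.Icc (1 : ℤ) ((p : ℤ) ^ (c + 1))).filter (fun x => Int.ModEq ((p : ℤ) ^ c) x ξ)

lemma card_residueLifts_le (p c : ℕ) (hp : 0 < p) (ξ : ℤ) : (residueLifts p c ξ).card ≤ p := by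
  have hq : (0 : ℤ) < (p : ℤ) ^ c := by positivity
  have h1 : residueLifts p c ξ =
      (Finset.Ioc (0 : ℤ) ((p : ℤ) ^ (c + 1))).filter (fun x => Int.ModEq ((p : ℤ) ^ c) x ξ) := by
    ext x
    simp [residueLifts, Int.lt_iff_add_one_le]
  have h2 := Int.Ioc_filter_modEq_card 0 ((p : ℤ) ^ (c + 1)) hq ξ
  have hq0 : ((p : ℚ) ^ c) ≠ 0 := by positivity
  have h3 : ((((p : ℤ) ^ (c + 1) : ℤ) : ℚ) - ξ) / (((p : ℤ) ^ c : ℤ) : ℚ) =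
      (((0 : ℤ) : ℚ) - ξ) / (((p : ℤ) ^ c : ℤ) : ℚ) + (p : ℕ) := by
    push_cast
    field_simp
    ring
  rw [h3, Int.floor_add_natCast, add_sub_cancel_left] at h2
  rw [← h1, max_eq_left (Int.natCast_nonneg p)] at h2
  exact_mod_cast h2.le

lemma sum_fexp_residueLifts (k p : ℕ) (hp : 0 < p) (X : ℝ) (c : ℕ) (ξ : ℤ) :
    ∑ ρ : residueLifts p c ξ, fexp k p X (c + 1) ρ = fexp k p X c ξ := by
  have hq : (0 : ℤ) < (p : ℤ) ^ (c + 1) := by positivity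
  have hdvd : (p : ℤ) ^ c ∣ (p : ℤ) ^ (c + 1) := pow_dvd_pow _ (Nat.le_succ c)
  rw [Finset.sum_coe_sort (residueLifts p c ξ) (fun ρ => fexp k p X (c + 1) ρ),
    fexp_eq_sum_trigChar k p X c ξ]
  let rep : ℤ → ℤ := fun x => (x - 1) % (p : ℤ) ^ (c + 1) + 1
  have hrep : ∀ x, Int.ModEq ((p : ℤ) ^ (c + 1)) (rep x) x := by
    intro x
    have h := (Int.mod_modEq (x - 1) ((p : ℤ) ^ (c + 1))).add_right 1
    simpa [rep] using h
  have hrep1 : ∀ x, 1 ≤ rep x ∧ rep x ≤ (p : ℤ) ^ (c + 1) := by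
    intro x
    have h1 := Int.emod_nonneg (x - 1) hq.ne'
    have h2 := Int.emod_lt_of_pos (x - 1) hq
    simp only [rep]
    omega
  have huniq : ∀ x ρ, 1 ≤ ρ → ρ ≤ (p : ℤ) ^ (c + 1) → Int.ModEq ((p : ℤ) ^ (c + 1)) x ρ →
      rep x = ρ := by
    intro x ρ h1 h2 h
    have h3 := h.sub_right 1
    simp only [rep]
    rw [h3, Int.emod_eq_of_lt (by omega) (by omega)]
    ring
  rw [← Finset.sum_fiberwise_of_maps_to (s := (Finset.Icc (1 : ℤ) ⌊X⌋).filter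
    (fun x => Int.ModEq ((p : ℤ) ^ c) x ξ)) (t := residueLifts p c ξ) (g := rep)]
  · refine Finset.sum_congr rfl fun ρ hρ => ?_
    rw [fexp_eq_sum_trigChar, Finset.filter_filter]
    refine Finset.sum_congr (Finset.filter_congr fun x _ => ?_) fun _ _ => rfl
    simp only [residueLifts, Finset.mem_filter, Finset.mem_Icc] at hρ
    constructor
    · intro h
      exact ⟨(h.of_dvd hdvd).trans hρ.2, huniq x ρ hρ.1.1 hρ.1.2 h⟩
    · rintro ⟨-, rfl⟩
      exact (hrep x).symm
  · intro x hx
    simp only [residueLifts, Finset.mem_filter, Finset.mem_Icc] at hx ⊢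
    exact ⟨hrep1 x, ((hrep x).of_dvd hdvd).trans hx.2⟩

lemma Fexp_eq_sum_injective (k p r : ℕ) (X : ℝ) (c : ℕ) (ξ : ℤ)
    [DecidablePred fun u : Fin r → residueLifts p c ξ => Function.Injective u] :
    Fexp k p r X c ξ =
      ∑ u : Fin r → residueLifts p c ξ with Function.Injective u,
        ∏ i, fexp k p X (c + 1) (u i) := by
  let emb : (Fin r → residueLifts p c ξ) ↪ (Fin r → ℤ) :=
    ⟨fun u i => u i, fun u w h => funext fun i => Subtype.ext (congrFun h i)⟩
  have hXi : XiSet p r c ξ =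
      (((Finset.univ : Finset (Fin r → residueLifts p c ξ)).filter
        Function.Injective).map emb : Finset (Fin r → ℤ)) := by
    ext v
    simp only [XiSet, Set.mem_ofPred_eq, Finset.coe_map, Finset.coe_filter, Finset.mem_univ,
      true_and, Set.mem_image]
    constructor
    · rintro ⟨h1, h2, h3⟩
      refine ⟨fun i => ⟨v i, ?_⟩, ?_, rfl⟩
      · simp only [residueLifts, Finset.mem_filter, Finset.mem_Icc]
        exact ⟨h1 i, h2 i⟩
      · intro i j hij
        exact h3 (congrArg Int.cast (Subtype.ext_iff.1 hij))
    · rintro ⟨u, hu, rfl⟩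
      have hmem : ∀ i, (1 ≤ (u i : ℤ) ∧ (u i : ℤ) ≤ (p : ℤ) ^ (c + 1)) ∧
          Int.ModEq ((p : ℤ) ^ c) (u i) ξ := by
        intro i
        simpa only [residueLifts, Finset.mem_filter, Finset.mem_Icc] using (u i).2
      refine ⟨fun i => (hmem i).1, fun i => (hmem i).2, fun i j hij => hu (Subtype.ext ?_)⟩
      have h1 : Int.ModEq ((p : ℤ) ^ (c + 1)) (u i) (u j) := by
        have := (ZMod.intCast_eq_intCast_iff (u i : ℤ) (u j : ℤ) (p ^ (c + 1))).1 hij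
        simpa using this
      have h2 := h1.sub_right 1
      have hi := (hmem i).1
      have hj := (hmem j).1
      rw [Int.ModEq, Int.emod_eq_of_lt (by omega) (by omega),
        Int.emod_eq_of_lt (by omega) (by omega)] at h2
      linarith
  ext α
  rw [Fexp, hXi, finsum_mem_coe_finset, Finset.sum_map, Finset.sum_apply]
  exact Finset.sum_congr rfl fun u _ => (Finset.prod_apply _ _ _).symm

lemma Fexp_mem_posTrig (k p r : ℕ) (X : ℝ) (c : ℕ) (ξ : ℤ) : Fexp k p r X c ξ ∈ posTrig k := by
  rw [Fexp_eq_sum_injective]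
  exact sum_mem fun u _ => prod_mem fun i _ => fexp_mem_posTrig k p X _ _

lemma exists_fexp_pow_eq_Fexp_add (k p r : ℕ) (hp : 0 < p) (X : ℝ) (c : ℕ) (ξ : ℤ) :
    ∃ E ∈ posTrig k, fexp k p X c ξ ^ r = Fexp k p r X c ξ + E := by
  refine ⟨∑ u : Fin r → residueLifts p c ξ with ¬ Function.Injective u,
    ∏ i, fexp k p X (c + 1) (u i), ?_, ?_⟩
  · exact sum_mem fun u _ => prod_mem fun i _ => fexp_mem_posTrig k p X _ _
  · rw [Fexp_eq_sum_injective, ← sum_fexp_residueLifts k p hp, Fintype.sum_pow,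
      Finset.sum_filter_add_sum_filter_not]

lemma exists_equiv_sum_extending {m s : ℕ} (e : Fin m ↪ Fin s) :
    ∃ σ : Fin m ⊕ Fin (s - m) ≃ Fin s, ∀ i, σ (Sum.inl i) = e i := by
  have hcard : Fintype.card ((Set.range e)ᶜ : Set (Fin s)) = s - m := by
    rw [Fintype.card_compl_set, Set.card_range_of_injective e.injective]
    simp
  refine ⟨(Equiv.sumCongr (Equiv.ofInjective e e.injective)
    (Fintype.equivFinOfCardEq hcard).symm).trans (Equiv.Set.sumCompl (Set.range e)), fun i => ?_⟩
  simp

/-- All letters of a word agree. -/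
def IsConstWord {R : Type*} {m : ℕ} (u : Fin m → R) : Prop := ∃ ρ, ∀ i, u i = ρ

/-- A word of length `r t` with `t ≥ 2` has either `r` distinct letters or a letter
occurring at least three times. -/
lemma exists_distinct_or_triple {R : Type*} {r t : ℕ} (ht : 2 ≤ t)
    (v : Fin (r * t) → R) :
    (∃ σ : Fin r ⊕ Fin (r * t - r) ≃ Fin (r * t),
      Function.Injective fun i => v (σ (Sum.inl i))) ∨
    (∃ σ : Fin 3 ⊕ Fin (r * t - 3) ≃ Fin (r * t),
      IsConstWord fun i => v (σ (Sum.inl i))) := by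
  rcases le_or_gt r (Finset.univ.image v).card with h | h
  · left
    obtain ⟨T, hT, hTc⟩ := Finset.exists_subset_card_eq h
    have hpre : ∀ y : T, ∃ i, v i = y := by
      intro y
      obtain ⟨i, -, hi⟩ := Finset.mem_image.1 (hT y.2)
      exact ⟨i, hi⟩
    choose w hw using hpre
    let e : Fin r → T := (T.equivFinOfCardEq hTc).symm
    have hinj : Function.Injective fun i => v (w (e i)) := by
      intro i j hij
      simp only [hw] at hij
      exact (T.equivFinOfCardEq hTc).symm.injective (Subtype.ext hij)
    obtain ⟨σ, hσ⟩ := exists_equiv_sum_extending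
      ⟨fun i => w (e i), Function.Injective.of_comp (f := v) hinj⟩
    exact ⟨σ, by simpa [hσ] using hinj⟩
  · right
    have hlt : (Finset.univ.image v).card * 2 < (Finset.univ : Finset (Fin (r * t))).card := by
      rw [Finset.card_univ, Fintype.card_fin]
      nlinarith
    obtain ⟨ρ, -, hρ⟩ := Finset.exists_lt_card_fiber_of_mul_lt_card_of_maps_to
      (f := v) (fun i hi => Finset.mem_image_of_mem v hi) hlt
    obtain ⟨T, hT, hTc⟩ := Finset.exists_subset_card_eq (Nat.succ_le_of_lt hρ)
    obtain ⟨σ, hσ⟩ := exists_equiv_sum_extending (T.orderEmbOfFin hTc).toEmbedding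
    refine ⟨σ, ρ, fun i => ?_⟩
    have := hT (T.orderEmbOfFin_mem hTc i)
    simp only [hσ]
    exact (Finset.mem_filter.1 this).2

lemma sum_prod_filter_comp_equiv {R A : Type*} [Fintype R] [CommSemiring A] {m n s : ℕ}
    (σ : Fin m ⊕ Fin n ≃ Fin s) (Q : (Fin m → R) → Prop) (g : R → A) :
    ∑ v : Fin s → R with Q (fun i => v (σ (Sum.inl i))), ∏ i, g (v i) =
      (∑ u : Fin m → R with Q u, ∏ i, g (u i)) * (∑ ρ, g ρ) ^ n := by
  rw [Fintype.sum_pow, Finset.sum_filter, Finset.sum_filter, Finset.sum_mul_sum,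
    ← Fintype.sum_prod_type']
  refine Fintype.sum_equiv
    ((Equiv.arrowCongr σ.symm (Equiv.refl R)).trans (Equiv.sumArrowEquivProdArrow _ _ R)) _ _ ?_
  intro v
  have h : ∏ i, g (v i) = (∏ i, g (v (σ (Sum.inl i)))) * ∏ i, g (v (σ (Sum.inr i))) := by
    rw [← Equiv.prod_comp σ, Fintype.prod_sum_type]
  simp [h, Equiv.sumArrowEquivProdArrow, Function.comp_def, ite_mul]

/-- The number of ways to single out `m` places of a word so that `Q` holds there. -/
def placeCount {R : Type*} {m s : ℕ} (n : ℕ) (Q : (Fin m → R) → Prop) (v : Fin s → R) : ℕ :=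
  ((Finset.univ : Finset (Fin m ⊕ Fin n ≃ Fin s)).filter
    fun σ => Q fun i => v (σ (Sum.inl i))).card

lemma placeCount_pos {R : Type*} {m n s : ℕ} {Q : (Fin m → R) → Prop} {v : Fin s → R}
    (σ : Fin m ⊕ Fin n ≃ Fin s) (h : Q fun i => v (σ (Sum.inl i))) : 0 < placeCount n Q v :=
  Finset.card_pos.2 ⟨σ, Finset.mem_filter.2 ⟨Finset.mem_univ _, h⟩⟩

lemma sum_placeCount_mul_prod {R A : Type*} [Fintype R] [CommSemiring A] {m n s : ℕ}
    (Q : (Fin m → R) → Prop) (g : R → A) :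
    ∑ v : Fin s → R, (placeCount n Q v : A) * ∏ i, g (v i) =
      (Fintype.card (Fin m ⊕ Fin n ≃ Fin s) : A) *
        ((∑ u : Fin m → R with Q u, ∏ i, g (u i)) * (∑ ρ, g ρ) ^ n) := by
  have h : ∑ σ : Fin m ⊕ Fin n ≃ Fin s,
      ∑ v : Fin s → R with Q (fun i => v (σ (Sum.inl i))), ∏ i, g (v i) =
      (Fintype.card (Fin m ⊕ Fin n ≃ Fin s) : A) *
        ((∑ u : Fin m → R with Q u, ∏ i, g (u i)) * (∑ ρ, g ρ) ^ n) := by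
    rw [Finset.sum_congr rfl fun σ _ => sum_prod_filter_comp_equiv σ Q g, Finset.sum_const,
      Finset.card_univ, nsmul_eq_mul]
  rw [← h]
  simp_rw [Finset.sum_filter]
  rw [Finset.sum_comm]
  refine Finset.sum_congr rfl fun v _ => ?_
  rw [← Finset.sum_filter, Finset.sum_const, nsmul_eq_mul, placeCount]

lemma exists_sum_pow_add_eq {R A : Type*} [Fintype R] [CommSemiring A] (P : Subsemiring A)
    {r t : ℕ} (ht : 2 ≤ t) (g : R → A) (hg : ∀ ρ, g ρ ∈ P) :
    ∃ E ∈ P, (∑ ρ, g ρ) ^ (r * t) + E =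
      (Fintype.card (Fin r ⊕ Fin (r * t - r) ≃ Fin (r * t)) : A) *
        ((∑ u : Fin r → R with Function.Injective u, ∏ i, g (u i)) * (∑ ρ, g ρ) ^ (r * t - r)) +
      (Fintype.card (Fin 3 ⊕ Fin (r * t - 3) ≃ Fin (r * t)) : A) *
        ((∑ ρ, g ρ ^ 3) * (∑ ρ, g ρ) ^ (r * t - 3)) := by
  let n₁ : (Fin (r * t) → R) → ℕ := placeCount (r * t - r) (m := r) Function.Injective
  let n₂ : (Fin (r * t) → R) → ℕ := placeCount (r * t - 3) (m := 3) IsConstWord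
  have hn : ∀ v, 1 ≤ n₁ v + n₂ v := by
    intro v
    rcases exists_distinct_or_triple ht v with ⟨σ, hσ⟩ | ⟨σ, hσ⟩
    · have : 0 < n₁ v := placeCount_pos σ hσ
      omega
    · have : 0 < n₂ v := placeCount_pos σ hσ
      omega
  have htriple : ∑ u : Fin 3 → R with IsConstWord u, ∏ i, g (u i) = ∑ ρ, g ρ ^ 3 := by
    symm
    refine Finset.sum_bij (fun ρ _ => fun _ => ρ) ?_ ?_ ?_ ?_
    · intro ρ _
      exact Finset.mem_filter.2 ⟨Finset.mem_univ _, ρ, fun _ => rfl⟩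
    · intro ρ _ ρ' _ h
      exact congrFun h 0
    · intro u hu
      obtain ⟨ρ, hρ⟩ := (Finset.mem_filter.1 hu).2
      exact ⟨ρ, Finset.mem_univ _, funext fun i => (hρ i).symm⟩
    · intro ρ _
      simp
  have hcount₁ : ∑ v, (n₁ v : A) * ∏ i, g (v i) =
      (Fintype.card (Fin r ⊕ Fin (r * t - r) ≃ Fin (r * t)) : A) *
        ((∑ u : Fin r → R with Function.Injective u, ∏ i, g (u i)) *
          (∑ ρ, g ρ) ^ (r * t - r)) := by
    convert sum_placeCount_mul_prod (m := r) (n := r * t - r) (s := r * t) Function.Injective g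
  have hcount₂ : ∑ v, (n₂ v : A) * ∏ i, g (v i) =
      (Fintype.card (Fin 3 ⊕ Fin (r * t - 3) ≃ Fin (r * t)) : A) *
        ((∑ ρ, g ρ ^ 3) * (∑ ρ, g ρ) ^ (r * t - 3)) := by
    rw [← htriple]
    exact sum_placeCount_mul_prod (n := r * t - 3) (s := r * t) IsConstWord g
  refine ⟨∑ v : Fin (r * t) → R, ((n₁ v + n₂ v - 1 : ℕ) : A) * ∏ i, g (v i), ?_, ?_⟩
  · exact sum_mem fun v _ => mul_mem (natCast_mem _ _) (prod_mem fun i _ => hg _)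
  · rw [← hcount₁, ← hcount₂, Fintype.sum_pow, ← Finset.sum_add_distrib, ← Finset.sum_add_distrib]
    refine Finset.sum_congr rfl fun v _ => ?_
    have h : (n₁ v : A) + n₂ v = 1 + ((n₁ v + n₂ v - 1 : ℕ) : A) := by
      exact_mod_cast congrArg (Nat.cast (R := A)) (by have := hn v; omega :
        n₁ v + n₂ v = 1 + (n₁ v + n₂ v - 1))
    rw [← add_mul, h, add_mul, one_mul]

lemma pow_mul_pow_le_young {A B e : ℝ} (hA : 0 ≤ A) (hB : 0 ≤ B) (he : 0 < e) (m n : ℕ) :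
    A ^ m * B ^ n ≤ e ^ m * B ^ (n + m) + (1 / e) ^ n * A ^ (n + m) := by
  rcases le_total A (e * B) with h | h
  · have h1 : A ^ m * B ^ n ≤ (e * B) ^ m * B ^ n := by gcongr
    have h2 : (e * B) ^ m * B ^ n = e ^ m * B ^ (n + m) := by ring
    have h3 : 0 ≤ (1 / e) ^ n * A ^ (n + m) := by positivity
    linarith
  · have hB' : B ≤ 1 / e * A := by
      rw [one_div, inv_mul_eq_div, le_div_iff₀ he]
      linarith
    have h1 : A ^ m * B ^ n ≤ A ^ m * (1 / e * A) ^ n := by gcongr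
    have h2 : A ^ m * (1 / e * A) ^ n = (1 / e) ^ n * A ^ (n + m) := by ring
    have h3 : 0 ≤ e ^ m * B ^ (n + m) := by positivity
    linarith

lemma continuous_fexp (k p : ℕ) (X : ℝ) (c : ℕ) (ξ : ℤ) : Continuous (fexp k p X c ξ) :=
  continuous_of_mem_posTrig (fexp_mem_posTrig k p X c ξ)

lemma continuous_Fexp (k p r : ℕ) (X : ℝ) (c : ℕ) (ξ : ℤ) : Continuous (Fexp k p r X c ξ) :=
  continuous_of_mem_posTrig (Fexp_mem_posTrig k p r X c ξ)

/-- The pointwise inequality behind the conditioning step, for `w` the modulus of a weight,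
`f` the modulus of a sum, `F` the modulus of its conditioned part and `x ρ` the moduli of
its pieces. -/
lemma conditioning_pointwise {R : Type*} [Fintype R] {r t L₁ L₂ : ℕ} {p q w f F e : ℝ}
    {x : R → ℝ} (hr : 1 ≤ r) (ht : 2 ≤ t) (hL₂ : r * t < 3 → L₂ = 0) (hw : 0 ≤ w) (hf : 0 ≤ f)
    (hF : 0 ≤ F) (hx : ∀ ρ, 0 ≤ x ρ) (hq : 0 < q) (hqp : q ^ 3 = p)
    (hcard : (Fintype.card R : ℝ) ≤ p) (he : 0 < e) (he1 : e ≤ 1)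
    (heL : (L₁ + L₂ : ℝ) * e ≤ 1 / 2) :
    w * f ^ (r * t) * (L₁ * (F * f ^ (r * t - r)) + L₂ * ((∑ ρ, x ρ ^ 3) * f ^ (r * t - 3))) ≤
      1 / 2 * (w * f ^ (2 * (r * t))) + L₁ * (1 / e) ^ (2 * t - 1) * (w * F ^ (2 * t)) +
        L₂ * (q / e) ^ (2 * (r * t) - 3) * ∑ ρ, w * x ρ ^ (2 * (r * t)) := by
  have hrt : r ≤ r * t := Nat.le_mul_of_pos_right r (by omega)
  have hs2 : 2 ≤ r * t := le_trans ht (Nat.le_mul_of_pos_left t hr)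
  have h1 : f ^ (r * t) * (F * f ^ (r * t - r)) ≤
      e * f ^ (2 * (r * t)) + (1 / e) ^ (2 * t - 1) * F ^ (2 * t) := by
    have h := pow_mul_pow_le_young hF (pow_nonneg hf r) he 1 (2 * t - 1)
    have e1 : 2 * t - 1 + 1 = 2 * t := by omega
    have e2 : r * t + (r * t - r) = r * (2 * t - 1) := by
      have : r * (2 * t - 1) + r = 2 * (r * t) := by
        obtain ⟨n, rfl⟩ : ∃ n, t = n + 1 := ⟨t - 1, by omega⟩
        rw [show 2 * (n + 1) - 1 = 2 * n + 1 by omega]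
        ring
      omega
    rw [e1, pow_one, pow_one, ← pow_mul, ← pow_mul] at h
    calc f ^ (r * t) * (F * f ^ (r * t - r)) = F * f ^ (r * t + (r * t - r)) := by
          rw [pow_add]; ring
      _ ≤ _ := by
          rw [e2]
          convert h using 4
          ring
  have h2 : L₂ * (f ^ (r * t) * ((∑ ρ, x ρ ^ 3) * f ^ (r * t - 3))) ≤
      L₂ * (e * f ^ (2 * (r * t)) +
        (q / e) ^ (2 * (r * t) - 3) * ∑ ρ, x ρ ^ (2 * (r * t))) := by
    rcases lt_or_ge (r * t) 3 with h3 | h3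
    · simp [hL₂ h3]
    refine mul_le_mul_of_nonneg_left ?_ (Nat.cast_nonneg _)
    have e3 : 2 * (r * t) - 3 + 3 = 2 * (r * t) := by omega
    have hterm : ∀ ρ, x ρ ^ 3 * f ^ (2 * (r * t) - 3) ≤
        (e / q) ^ 3 * f ^ (2 * (r * t)) + (q / e) ^ (2 * (r * t) - 3) * x ρ ^ (2 * (r * t)) := by
      intro ρ
      have h := pow_mul_pow_le_young (hx ρ) hf (div_pos he hq) 3 (2 * (r * t) - 3)
      rwa [e3, one_div_div] at h
    have hsum := Finset.sum_le_sum fun ρ (_ : ρ ∈ Finset.univ) => hterm ρ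
    rw [← Finset.sum_mul, Finset.sum_add_distrib, Finset.sum_const, ← Finset.mul_sum,
      Finset.card_univ, nsmul_eq_mul] at hsum
    have hp : 0 < p := hqp ▸ pow_pos hq 3
    have hcoef : (Fintype.card R : ℝ) * ((e / q) ^ 3 * f ^ (2 * (r * t))) ≤
        e * f ^ (2 * (r * t)) := by
      have he3 : e ^ 3 ≤ e := pow_le_of_le_one he.le he1 (by norm_num)
      calc (Fintype.card R : ℝ) * ((e / q) ^ 3 * f ^ (2 * (r * t)))
          ≤ p * ((e / q) ^ 3 * f ^ (2 * (r * t))) := by gcongr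
        _ = e ^ 3 * f ^ (2 * (r * t)) := by
            rw [div_pow, hqp]
            field_simp
        _ ≤ _ := by gcongr
    calc f ^ (r * t) * ((∑ ρ, x ρ ^ 3) * f ^ (r * t - 3))
        = (∑ ρ, x ρ ^ 3) * f ^ (r * t + (r * t - 3)) := by rw [pow_add]; ring
      _ = (∑ ρ, x ρ ^ 3) * f ^ (2 * (r * t) - 3) := by
          rw [show r * t + (r * t - 3) = 2 * (r * t) - 3 by omega]
      _ ≤ _ := by linarith
  have h3 : (L₁ : ℝ) * (f ^ (r * t) * (F * f ^ (r * t - r))) ≤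
      L₁ * (e * f ^ (2 * (r * t)) + (1 / e) ^ (2 * t - 1) * F ^ (2 * t)) :=
    mul_le_mul_of_nonneg_left h1 (Nat.cast_nonneg _)
  have h4 : (L₁ + L₂ : ℝ) * e * f ^ (2 * (r * t)) ≤ 1 / 2 * f ^ (2 * (r * t)) := by gcongr
  rw [← Finset.mul_sum]
  calc _ = w * (L₁ * (f ^ (r * t) * (F * f ^ (r * t - r))) +
          L₂ * (f ^ (r * t) * ((∑ ρ, x ρ ^ 3) * f ^ (r * t - 3)))) := by ring
    _ ≤ w * (1 / 2 * f ^ (2 * (r * t)) + L₁ * (1 / e) ^ (2 * t - 1) * F ^ (2 * t) +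
          L₂ * (q / e) ^ (2 * (r * t) - 3) * ∑ ρ, x ρ ^ (2 * (r * t))) := by
        refine mul_le_mul_of_nonneg_left ?_ hw
        linarith
    _ = _ := by ring

/-- The conditioning step: passing from `I_{a,b}` to `K_{a,b}` and `I_{a,b+1}`. -/
lemma exists_conditioning_const {r t : ℕ} (hr : 1 ≤ r) (ht : 2 ≤ t) :
    ∃ C : ℝ, 1 ≤ C ∧ ∀ (k p : ℕ) (_ : 0 < p) (X : ℝ) (a b : ℕ) (ξ η : ℤ) (q B : ℝ),
      0 < q → q ^ 3 = p →
      (∀ ρ ∈ residueLifts p b η, Iab k p r (r * t) X a (b + 1) ξ ρ ≤ B) → 0 ≤ B →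
      Iab k p r (r * t) X a b ξ η ≤ C * (Kab k p r t X a b ξ η + q ^ (2 * (r * t)) * B) := by
  set L₁ : ℕ := Fintype.card (Fin r ⊕ Fin (r * t - r) ≃ Fin (r * t)) with hL₁
  set L₂ : ℕ := Fintype.card (Fin 3 ⊕ Fin (r * t - 3) ≃ Fin (r * t)) with hL₂
  have hL₂0 : r * t < 3 → L₂ = 0 := by
    intro h
    rw [hL₂, Fintype.card_eq_zero_iff]
    refine ⟨fun σ => ?_⟩
    have := Fintype.card_congr σ
    simp at this
    omega
  have hs2 : 2 ≤ r * t := le_trans ht (Nat.le_mul_of_pos_left t hr)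
  set e : ℝ := 1 / (2 * (L₁ + L₂ + 1)) with he
  have hLpos : (0 : ℝ) < L₁ + L₂ + 1 := by positivity
  have he0 : 0 < e := by positivity
  have he1 : e ≤ 1 := by
    rw [he, div_le_one (by positivity)]
    have : (0 : ℝ) ≤ L₁ + L₂ := by positivity
    linarith
  have heL : (L₁ + L₂ : ℝ) * e ≤ 1 / 2 := by
    rw [he, mul_one_div, div_le_div_iff₀ (by positivity) (by norm_num)]
    linarith
  set c₁ : ℝ := 2 * (L₁ * (1 / e) ^ (2 * t - 1)) with hc₁
  set c₂ : ℝ := 2 * (L₂ * (1 / e) ^ (2 * (r * t) - 3)) with hc₂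
  have hc₁0 : 0 ≤ c₁ := by positivity
  have hc₂0 : 0 ≤ c₂ := by positivity
  refine ⟨1 + c₁ + c₂, by linarith, ?_⟩
  intro k p hp X a b ξ η q B hq hqp hB hB0
  obtain ⟨E, hE, hEeq⟩ := exists_sum_pow_add_eq (posTrig k) (r := r) ht
    (fun ρ : residueLifts p b η => fexp k p X (b + 1) ρ) (fun ρ => fexp_mem_posTrig k p X _ _)
  rw [sum_fexp_residueLifts k p hp, ← Fexp_eq_sum_injective, ← hL₁, ← hL₂] at hEeq
  set W : (Fin k → ℝ) → ℂ := Fexp k p r X a ξ * star (Fexp k p r X a ξ) *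
    star (fexp k p X b η) ^ (r * t) with hW
  have hWmem : W ∈ posTrig k :=
    mul_mem (mul_mem (Fexp_mem_posTrig k p r X a ξ) (star_mem_posTrig (Fexp_mem_posTrig k p r X a ξ)))
      (pow_mem (star_mem_posTrig (fexp_mem_posTrig k p X b η)) _)
  have hWE := integral_re_nonneg_of_mem_posTrig (mul_mem hWmem hE)
  have hcard : (Fintype.card (residueLifts p b η) : ℝ) ≤ p := by
    rw [Fintype.card_coe]
    exact_mod_cast card_residueLifts_le p b hp η
  have hpt : ∀ α, ‖Fexp k p r X a ξ α‖ ^ 2 * ‖fexp k p X b η α‖ ^ (2 * (r * t)) +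
      ((W * E) α).re ≤
      1 / 2 * (‖Fexp k p r X a ξ α‖ ^ 2 * ‖fexp k p X b η α‖ ^ (2 * (r * t))) +
        L₁ * (1 / e) ^ (2 * t - 1) *
          (‖Fexp k p r X a ξ α‖ ^ 2 * ‖Fexp k p r X b η α‖ ^ (2 * t)) +
        L₂ * (q / e) ^ (2 * (r * t) - 3) * ∑ ρ : residueLifts p b η,
          ‖Fexp k p r X a ξ α‖ ^ 2 * ‖fexp k p X (b + 1) ρ α‖ ^ (2 * (r * t)) := by
    intro α
    refine le_trans ?_ (conditioning_pointwise hr ht hL₂0 (sq_nonneg _) (norm_nonneg _)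
      (norm_nonneg _) (fun ρ => norm_nonneg _) hq hqp hcard he0 he1 heL)
    have h1 : ‖Fexp k p r X a ξ α‖ ^ 2 * ‖fexp k p X b η α‖ ^ (2 * (r * t)) =
        (W α * fexp k p X b η α ^ (r * t)).re := by
      have h4 : W α * fexp k p X b η α ^ (r * t) =
          ((‖Fexp k p r X a ξ α‖ ^ 2 * ‖fexp k p X b η α‖ ^ (2 * (r * t)) : ℝ) : ℂ) := by
        simp only [hW, Pi.mul_apply, Pi.star_apply, Pi.pow_apply]
        rw [Complex.star_def, Complex.mul_conj, Complex.normSq_eq_norm_sq,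
          mul_assoc, ← mul_pow, mul_comm ((starRingEnd ℂ) _), Complex.mul_conj,
          Complex.normSq_eq_norm_sq, ← Complex.ofReal_pow, ← Complex.ofReal_mul, ← pow_mul]
      rw [h4, Complex.ofReal_re]
    have hEα := congrFun hEeq α
    rw [h1, Pi.mul_apply, ← Complex.add_re, ← mul_add]
    have h5 : fexp k p X b η α ^ (r * t) + E α =
        L₁ * (Fexp k p r X b η α * fexp k p X b η α ^ (r * t - r)) +
        L₂ * ((∑ ρ : residueLifts p b η, fexp k p X (b + 1) ρ α ^ 3) *
          fexp k p X b η α ^ (r * t - 3)) := by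
      simpa [Finset.sum_apply] using hEα
    have hWn : ‖W α‖ = ‖Fexp k p r X a ξ α‖ ^ 2 * ‖fexp k p X b η α‖ ^ (r * t) := by
      simp [hW, sq]
    rw [h5, ← hWn]
    refine (Complex.re_le_norm _).trans ?_
    rw [norm_mul]
    refine mul_le_mul_of_nonneg_left ?_ (norm_nonneg _)
    refine (norm_add_le _ _).trans ?_
    simp only [norm_mul, norm_pow, Complex.norm_natCast]
    gcongr
    refine (norm_sum_le _ _).trans ?_
    simp only [norm_pow, le_refl]
  have hcF := (continuous_Fexp k p r X a ξ).norm.pow 2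
  have iI : IntegrableOn (fun α => ‖Fexp k p r X a ξ α‖ ^ 2 *
      ‖fexp k p X b η α‖ ^ (2 * (r * t))) (box k) :=
    integrableOn_box (hcF.mul ((continuous_fexp k p X b η).norm.pow _))
  have iK : IntegrableOn (fun α => ‖Fexp k p r X a ξ α‖ ^ 2 *
      ‖Fexp k p r X b η α‖ ^ (2 * t)) (box k) :=
    integrableOn_box (hcF.mul ((continuous_Fexp k p r X b η).norm.pow _))
  have iS : ∀ ρ : residueLifts p b η, IntegrableOn (fun α => ‖Fexp k p r X a ξ α‖ ^ 2 *
      ‖fexp k p X (b + 1) ρ α‖ ^ (2 * (r * t))) (box k) := fun ρ =>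
    integrableOn_box (hcF.mul ((continuous_fexp k p X (b + 1) ρ).norm.pow _))
  have iE : IntegrableOn (fun α => ((W * E) α).re) (box k) :=
    integrableOn_box (Complex.continuous_re.comp
      (continuous_of_mem_posTrig (mul_mem hWmem hE)))
  have iSum := integrable_finsetSum Finset.univ fun ρ (_ : ρ ∈ Finset.univ) => iS ρ
  have hmono := integral_mono (μ := volume.restrict (box k)) (iI.add iE)
    (((iI.const_mul (1 / 2)).add (iK.const_mul (L₁ * (1 / e) ^ (2 * t - 1)))).add
      (iSum.const_mul (L₂ * (q / e) ^ (2 * (r * t) - 3)))) hpt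
  have hl := integral_add iI iE
  have hr1 := integral_add ((iI.const_mul (1 / 2)).add
    (iK.const_mul (L₁ * (1 / e) ^ (2 * t - 1))))
      (iSum.const_mul (L₂ * (q / e) ^ (2 * (r * t) - 3)))
  have hr2 := integral_add (iI.const_mul (1 / 2)) (iK.const_mul (L₁ * (1 / e) ^ (2 * t - 1)))
  simp only [Pi.add_apply] at hmono hl hr1 hr2
  rw [hl, hr1, hr2, integral_const_mul, integral_const_mul, integral_const_mul,
    integral_finsetSum _ fun ρ _ => iS ρ] at hmono
  change Iab k p r (r * t) X a b ξ η + _ ≤ 1 / 2 * Iab k p r (r * t) X a b ξ η +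
    L₁ * (1 / e) ^ (2 * t - 1) * Kab k p r t X a b ξ η +
    L₂ * (q / e) ^ (2 * (r * t) - 3) *
      ∑ ρ : residueLifts p b η, Iab k p r (r * t) X a (b + 1) ξ ρ at hmono
  have hsumB : ∑ ρ : residueLifts p b η, Iab k p r (r * t) X a (b + 1) ξ ρ ≤ q ^ 3 * B := by
    calc _ ≤ ∑ ρ : residueLifts p b η, B := Finset.sum_le_sum fun ρ _ => hB ρ ρ.2
      _ = (Fintype.card (residueLifts p b η) : ℝ) * B := by
          rw [Finset.sum_const, Finset.card_univ, nsmul_eq_mul]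
      _ ≤ _ := by rw [hqp]; gcongr
  have hK0 : 0 ≤ Kab k p r t X a b ξ η := integral_nonneg fun α => by positivity
  have hqe : L₂ * (q / e) ^ (2 * (r * t) - 3) * (q ^ 3 * B) =
      c₂ / 2 * (q ^ (2 * (r * t)) * B) := by
    have e3 : q ^ (2 * (r * t)) = q ^ (2 * (r * t) - 3) * q ^ 3 := by
      rw [← pow_add]
      congr 1
      omega
    rw [e3, hc₂, div_eq_mul_one_div q e, mul_pow]
    ring
  have hS : L₂ * (q / e) ^ (2 * (r * t) - 3) *
      ∑ ρ : residueLifts p b η, Iab k p r (r * t) X a (b + 1) ξ ρ ≤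
        c₂ / 2 * (q ^ (2 * (r * t)) * B) := by
    rw [← hqe]
    gcongr
  have hQB : 0 ≤ q ^ (2 * (r * t)) * B := by positivity
  have hcK : L₁ * (1 / e) ^ (2 * t - 1) * Kab k p r t X a b ξ η =
      c₁ / 2 * Kab k p r t X a b ξ η := by rw [hc₁]; ring
  rw [hcK] at hmono
  have hx1 := mul_nonneg hc₁0 hQB
  have hx2 := mul_nonneg hc₂0 hK0
  linarith

lemma exists_add_pow_eq {A : Type*} [CommSemiring A] (P : Subsemiring A) {x z : A} (hx : x ∈ P)
    (hz : z ∈ P) (n : ℕ) : ∃ z' ∈ P, (x + z) ^ n = x ^ n + z' := by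
  induction n with
  | zero => exact ⟨0, zero_mem P, by simp⟩
  | succ n ih =>
    obtain ⟨z', hz', h⟩ := ih
    refine ⟨x ^ n * z + z' * (x + z), add_mem (mul_mem (pow_mem hx n) hz)
      (mul_mem hz' (add_mem hx hz)), ?_⟩
    rw [pow_succ, h]
    ring

lemma integral_norm_pow_le_of_mem_posTrig {k : ℕ} {x z : (Fin k → ℝ) → ℂ} (hx : x ∈ posTrig k)
    (hz : z ∈ posTrig k) (n : ℕ) :
    ∫ α in box k, ‖x α‖ ^ (2 * n) ≤ ∫ α in box k, ‖(x + z) α‖ ^ (2 * n) := by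
  obtain ⟨z', hz', h⟩ := exists_add_pow_eq (posTrig k) hx hz n
  set E : (Fin k → ℝ) → ℂ := x ^ n * star z' + z' * star (x ^ n + z') with hEdef
  have hxn := pow_mem hx n
  have hE : E ∈ posTrig k := add_mem (mul_mem hxn (star_mem_posTrig hz'))
    (mul_mem hz' (star_mem_posTrig (add_mem hxn hz')))
  have hpt : ∀ α, ‖(x + z) α‖ ^ (2 * n) = ‖x α‖ ^ (2 * n) + (E α).re := by
    intro α
    have h1 : (x + z) ^ n * star ((x + z) ^ n) = x ^ n * star (x ^ n) + E := by
      rw [h, hEdef, star_add]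
      ring
    have h2 : (x + z) α ^ n * star ((x + z) α) ^ n = x α ^ n * star (x α) ^ n + E α := by
      simpa using congrFun h1 α
    rw [norm_pow_two_mul, norm_pow_two_mul, h2, Complex.add_re]
  simp_rw [hpt]
  have h1 := integral_add
    (integrableOn_box ((continuous_of_mem_posTrig hx).norm.pow (2 * n)))
    (integrableOn_box (Complex.continuous_re.comp (continuous_of_mem_posTrig hE)))
  simp only [Function.comp_apply, Pi.pow_apply] at h1
  rw [h1]
  linarith [integral_re_nonneg_of_mem_posTrig hE]

lemma Iab_le_young (k p r t : ℕ) (hp : 0 < p) (X : ℝ) (a c : ℕ) (ξ η : ℤ) {e : ℝ} (he : 0 < e) :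
    Iab k p r (r * t) X a c ξ η ≤
      e * Jcount (r * (t + 1)) k (X / (p : ℝ) ^ c + 1) +
        (1 / e) ^ t * Jcount (r * (t + 1)) k (X / (p : ℝ) ^ a + 1) := by
  have hpt : ∀ α, ‖Fexp k p r X a ξ α‖ ^ 2 * ‖fexp k p X c η α‖ ^ (2 * (r * t)) ≤
      e * ‖fexp k p X c η α‖ ^ (2 * (r * (t + 1))) +
        (1 / e) ^ t * ‖Fexp k p r X a ξ α‖ ^ (2 * (t + 1)) := by
    intro α
    have h := pow_mul_pow_le_young (sq_nonneg ‖Fexp k p r X a ξ α‖)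
      (pow_nonneg (norm_nonneg (fexp k p X c η α)) (2 * r)) he 1 t
    simpa only [pow_one, ← pow_mul, mul_assoc] using h
  have i1 := integrableOn_box ((continuous_fexp k p X c η).norm.pow (2 * (r * (t + 1))))
  have i2 := integrableOn_box ((continuous_Fexp k p r X a ξ).norm.pow (2 * (t + 1)))
  have iI := integrableOn_box (((continuous_Fexp k p r X a ξ).norm.pow 2).mul
    ((continuous_fexp k p X c η).norm.pow (2 * (r * t))))
  have hmono := integral_mono (μ := volume.restrict (box k)) iI
    ((i1.const_mul e).add (i2.const_mul ((1 / e) ^ t))) hpt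
  have hadd := integral_add (i1.const_mul e) (i2.const_mul ((1 / e) ^ t))
  simp only [Pi.add_apply, Pi.mul_apply, Pi.pow_apply] at hmono hadd
  rw [hadd, integral_const_mul, integral_const_mul] at hmono
  have hJ1 := integral_fexp_pow_le_Jcount k p (r * (t + 1)) hp X c η
  have hJ2 : ∫ α in box k, ‖Fexp k p r X a ξ α‖ ^ (2 * (t + 1)) ≤
      Jcount (r * (t + 1)) k (X / (p : ℝ) ^ a + 1) := by
    obtain ⟨E, hE, hEeq⟩ := exists_fexp_pow_eq_Fexp_add k p r hp X a ξ
    refine le_trans (integral_norm_pow_le_of_mem_posTrig (Fexp_mem_posTrig k p r X a ξ) hE _) ?_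
    rw [← hEeq]
    refine le_trans (le_of_eq ?_) (integral_fexp_pow_le_Jcount k p (r * (t + 1)) hp X a ξ)
    congr 1
    ext α
    rw [Pi.pow_apply, norm_pow, ← pow_mul]
    congr 1
    ring
  refine hmono.trans ?_
  gcongr

lemma bddAbove_of_residue_pairs (f : ℤ → ℤ → ℝ) (A B : ℤ) (Q : ℤ → ℤ → Prop) :
    BddAbove {v : ℝ | ∃ ξ η : ℤ, 1 ≤ ξ ∧ ξ ≤ A ∧ 1 ≤ η ∧ η ≤ B ∧ Q ξ η ∧ v = f ξ η} := by
  refine Set.Finite.bddAbove ((((Set.finite_Icc 1 A).prod (Set.finite_Icc 1 B)).image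
    fun z => f z.1 z.2).subset ?_)
  rintro v ⟨ξ, η, h1, h2, h3, h4, -, rfl⟩
  exact ⟨(ξ, η), ⟨⟨h1, h2⟩, ⟨h3, h4⟩⟩, rfl⟩

lemma Iab_nonneg (k p r s : ℕ) (X : ℝ) (a b : ℕ) (ξ η : ℤ) : 0 ≤ Iab k p r s X a b ξ η :=
  integral_nonneg fun α => by positivity

lemma Kab_nonneg (k p r t : ℕ) (X : ℝ) (a b : ℕ) (ξ η : ℤ) : 0 ≤ Kab k p r t X a b ξ η :=
  integral_nonneg fun α => by positivity

lemma Imax_nonneg (k p r s : ℕ) (X : ℝ) (a b : ℕ) : 0 ≤ Imax k p r s X a b := by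
  refine Real.sSup_nonneg ?_
  rintro v ⟨ξ, η, -, -, -, -, -, rfl⟩
  exact Iab_nonneg _ _ _ _ _ _ _ _ _

lemma Iab_le_Imax {k p r s : ℕ} {X : ℝ} {a b : ℕ} {ξ η : ℤ} (h1 : 1 ≤ ξ) (h2 : ξ ≤ (p : ℤ) ^ a)
    (h3 : 1 ≤ η) (h4 : η ≤ (p : ℤ) ^ b) (h5 : ¬ Int.ModEq (p : ℤ) η ξ) :
    Iab k p r s X a b ξ η ≤ Imax k p r s X a b :=
  le_csSup (bddAbove_of_residue_pairs (fun ξ η => Iab k p r s X a b ξ η) _ _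
    fun ξ η => ¬ Int.ModEq (p : ℤ) η ξ) ⟨ξ, η, h1, h2, h3, h4, h5, rfl⟩

lemma Kmax_nonneg (k p r t : ℕ) (X : ℝ) {a : ℕ} (ha : 1 ≤ a) (b : ℕ) :
    0 ≤ Kmax k p r t X a b := by
  rw [Kmax, if_neg (by omega)]
  refine Real.sSup_nonneg ?_
  rintro v ⟨ξ, η, -, -, -, -, -, rfl⟩
  exact Kab_nonneg _ _ _ _ _ _ _ _ _

lemma Kab_le_Kmax {k p r t : ℕ} {X : ℝ} {a b : ℕ} {ξ η : ℤ} (ha : 1 ≤ a) (h1 : 1 ≤ ξ)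
    (h2 : ξ ≤ (p : ℤ) ^ a) (h3 : 1 ≤ η) (h4 : η ≤ (p : ℤ) ^ b)
    (h5 : ¬ Int.ModEq (p : ℤ) η ξ) : Kab k p r t X a b ξ η ≤ Kmax k p r t X a b := by
  rw [Kmax, if_neg (by omega)]
  exact le_csSup (bddAbove_of_residue_pairs (fun ξ η => Kab k p r t X a b ξ η) _ _
    fun ξ η => ¬ Int.ModEq (p : ℤ) η ξ) ⟨ξ, η, h1, h2, h3, h4, h5, rfl⟩

lemma exists_Imax_conditioning_const {r t : ℕ} (hr : 1 ≤ r) (ht : 2 ≤ t) :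
    ∃ C : ℝ, 1 ≤ C ∧ ∀ (k p : ℕ) (_ : 0 < p) (X : ℝ) (a b : ℕ) (_ : 1 ≤ a) (_ : 1 ≤ b) (q : ℝ),
      0 < q → q ^ 3 = p →
      Imax k p r (r * t) X a b ≤
        C * (Kmax k p r t X a b + q ^ (2 * (r * t)) * Imax k p r (r * t) X a (b + 1)) := by
  obtain ⟨C, hC, h⟩ := exists_conditioning_const hr ht
  refine ⟨C, hC, fun k p hp X a b ha hb q hq hqp => ?_⟩
  have hI := Imax_nonneg k p r (r * t) X a (b + 1)
  have hK := Kmax_nonneg k p r t X ha b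
  refine Real.sSup_le ?_ (by positivity)
  rintro v ⟨ξ, η, h1, h2, h3, h4, h5, rfl⟩
  have hB : ∀ ρ ∈ residueLifts p b η,
      Iab k p r (r * t) X a (b + 1) ξ ρ ≤ Imax k p r (r * t) X a (b + 1) := by
    intro ρ hρ
    simp only [residueLifts, Finset.mem_filter, Finset.mem_Icc] at hρ
    refine Iab_le_Imax h1 h2 hρ.1.1 hρ.1.2 fun hρξ => h5 ?_
    exact (hρ.2.of_dvd (dvd_pow_self _ (by omega))).symm.trans hρξ
  refine (h k p hp X a b ξ η q _ hq hqp hB hI).trans ?_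
  have := Kab_le_Kmax (k := k) (r := r) (t := t) (X := X) ha h1 h2 h3 h4 h5
  gcongr

lemma le_of_iterated_recursion {A K : ℕ → ℝ} {C Q : ℝ} (hC : 1 ≤ C) (hQ : 0 ≤ Q)
    (hK : ∀ n, 0 ≤ K n) (h : ∀ n, A n ≤ C * (K n + Q * A (n + 1))) (n : ℕ) :
    A 0 ≤ C ^ n * (∑ j ∈ Finset.range n, Q ^ j * K j + Q ^ n * A n) := by
  induction n with
  | zero => simp
  | succ n ih =>
    have hS : 0 ≤ ∑ j ∈ Finset.range n, Q ^ j * K j :=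
      Finset.sum_nonneg fun j _ => mul_nonneg (pow_nonneg hQ j) (hK j)
    calc A 0 ≤ C ^ n * (∑ j ∈ Finset.range n, Q ^ j * K j + Q ^ n * A n) := ih
      _ ≤ C ^ n * (C * ∑ j ∈ Finset.range n, Q ^ j * K j +
            Q ^ n * (C * (K n + Q * A (n + 1)))) := by
          gcongr
          · exact le_mul_of_one_le_left hS hC
          · exact h n
      _ = _ := by
          rw [Finset.sum_range_succ]
          ring

lemma exists_le_of_iterated_recursion {A K : ℕ → ℝ} {C Q : ℝ} (hC : 1 ≤ C) (hQ : 0 ≤ Q)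
    (hK : ∀ n, 0 ≤ K n) (h : ∀ n, A n ≤ C * (K n + Q * A (n + 1)))
    {n : ℕ} (hn : 0 < n) :
    ∃ j < n, A 0 ≤ C ^ n * (n * (Q ^ j * K j) + Q ^ n * A n) := by
  obtain ⟨j, hj, hmax⟩ := Finset.exists_max_image (Finset.range n) (fun j => Q ^ j * K j)
    ⟨0, Finset.mem_range.2 hn⟩
  refine ⟨j, Finset.mem_range.1 hj, (le_of_iterated_recursion hC hQ hK h n).trans ?_⟩
  have hs := Finset.sum_le_card_nsmul _ _ _ hmax
  rw [Finset.card_range, nsmul_eq_mul] at hs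
  gcongr

lemma natCast_le_of_Jcount_lt_rpow {u k : ℕ} {Z L : ℝ}
    (h : ∀ Y : ℝ, Z ≤ Y → (Jcount u k Y : ℝ) < Y ^ L) : (u : ℝ) ≤ L := by
  set n : ℕ := max 2 ⌈Z⌉₊
  have h2 : (2 : ℝ) ≤ n := by exact_mod_cast le_max_left 2 ⌈Z⌉₊
  have hZ : Z ≤ n := (Nat.le_ceil Z).trans (by exact_mod_cast le_max_right 2 ⌈Z⌉₊)
  have h1 : ((n : ℝ) ^ (u : ℝ)) < (n : ℝ) ^ L := by
    refine lt_of_le_of_lt ?_ (h n hZ)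
    rw [Real.rpow_natCast]
    exact_mod_cast floor_pow_le_Jcount u k n
  exact ((Real.rpow_lt_rpow_left_iff (by linarith)).1 h1).le

lemma Jcount_div_add_one_le {u k p c : ℕ} {X M L : ℝ} (hX : 1 ≤ X) (hM : 1 ≤ M) (hMp : M < p)
    (hMc : M ^ c ≤ X ^ ((1 : ℝ) / 2))
    (h : ∀ Y : ℝ, X ^ ((1 : ℝ) / 2) ≤ Y → (Jcount u k Y : ℝ) < Y ^ L) :
    (Jcount u k (X / (p : ℝ) ^ c + 1) : ℝ) ≤ (2 * (X / M ^ c)) ^ L := by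
  have hMc0 : 0 < M ^ c := by positivity
  have hroot : X ^ ((1 : ℝ) / 2) * X ^ ((1 : ℝ) / 2) = X := by
    rw [← Real.rpow_add (by linarith)]
    norm_num
  have hroot1 : 1 ≤ X ^ ((1 : ℝ) / 2) := Real.one_le_rpow hX (by norm_num)
  have hdiv : X ^ ((1 : ℝ) / 2) ≤ X / M ^ c := by
    rw [le_div_iff₀ hMc0]
    nlinarith
  have hp : X / (p : ℝ) ^ c ≤ X / M ^ c := by gcongr
  refine le_trans ?_ (h _ (by linarith : _ ≤ 2 * (X / M ^ c))).le
  exact Nat.cast_le.2 (Jcount_mono _ _ (by linarith))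

lemma Imax_le_of_Jcount_lt {k p r t a c : ℕ} {X M L : ℝ} (hX : 1 ≤ X) (hM : 1 ≤ M)
    (hMp : M < p) (hac : a ≤ c) (hMc : M ^ c ≤ X ^ ((1 : ℝ) / 2))
    (h : ∀ Y : ℝ, X ^ ((1 : ℝ) / 2) ≤ Y → (Jcount (r * (t + 1)) k Y : ℝ) < Y ^ L) :
    Imax k p r (r * t) X a c ≤
      2 * (2 * (X / M ^ a)) ^ L * (M ^ (c - a)) ^ (-((r * t : ℕ) : ℝ)) := by
  have hp : 0 < p := by exact_mod_cast (zero_lt_one.trans_le hM).trans hMp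
  have hL := natCast_le_of_Jcount_lt_rpow h
  have hMa : M ^ a ≤ X ^ ((1 : ℝ) / 2) := (pow_le_pow_right₀ hM hac).trans hMc
  have hD : 1 ≤ M ^ (c - a) := one_le_pow₀ hM
  have hD0 : 0 < M ^ (c - a) := by positivity
  have hsplit : M ^ c = M ^ a * M ^ (c - a) := by rw [← pow_add, Nat.add_sub_cancel' hac]
  set D := M ^ (c - a)
  set W := 2 * (X / M ^ a) with hW
  have hW0 : 0 < W := by positivity
  have hWc : 2 * (X / M ^ c) = W / D := by
    rw [hsplit, hW]
    field_simp
  have hJa := Jcount_div_add_one_le hX hM hMp hMa h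
  have hJc := Jcount_div_add_one_le hX hM hMp hMc h
  rw [hWc] at hJc
  have ht : (0 : ℝ) < (t : ℝ) + 1 := by positivity
  have hexp : D ^ (-(L * t / (t + 1))) ≤ D ^ (-((r * t : ℕ) : ℝ)) := by
    refine Real.rpow_le_rpow_of_exponent_le hD (neg_le_neg ?_)
    rw [le_div_iff₀ ht]
    push_cast at hL ⊢
    nlinarith [(Nat.cast_nonneg t : (0 : ℝ) ≤ t)]
  refine Real.sSup_le ?_ (by positivity)
  rintro v ⟨ξ, η, -, -, -, -, -, rfl⟩
  have he : 0 < D ^ (L / (t + 1)) := by positivity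
  refine (Iab_le_young k p r t hp X a c ξ η he).trans ?_
  have h1 : D ^ (L / (t + 1)) * (W / D) ^ L = W ^ L * D ^ (-(L * t / (t + 1))) := by
    rw [Real.div_rpow hW0.le hD0.le, mul_div_left_comm, ← Real.rpow_sub hD0]
    congr 2
    field_simp
    ring
  have h2 : (1 / D ^ (L / (t + 1))) ^ t = D ^ (-(L * t / (t + 1))) := by
    rw [one_div, ← Real.rpow_neg hD0.le, ← Real.rpow_mul_natCast hD0.le]
    congr 1
    ring
  calc _ ≤ D ^ (L / (t + 1)) * (W / D) ^ L + (1 / D ^ (L / (t + 1))) ^ t * W ^ L := by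
        gcongr
    _ = 2 * W ^ L * D ^ (-(L * t / (t + 1))) := by
        rw [h1, h2]
        ring
    _ ≤ _ := by gcongr

lemma thetaC_pos {t : ℕ} (ht : 2 ≤ t) (N : ℕ) : 0 < thetaC t N :=
  Real.rpow_pos_of_pos (by positivity) _

lemma deltaC_le {t N : ℕ} (ht : 2 ≤ t) (hN : 1 ≤ N) : deltaC t N ≤ thetaC t N / 2 := by
  have hN' : (1 : ℝ) ≤ N := by exact_mod_cast hN
  have htN : (1 : ℝ) ≤ (t : ℝ) ^ N := one_le_pow₀ (by exact_mod_cast (by omega : 1 ≤ t))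
  refine div_le_div_of_nonneg_left (thetaC_pos ht N).le two_pos ?_
  nlinarith

lemma deltaC_nonneg {t : ℕ} (ht : 2 ≤ t) (N : ℕ) : 0 ≤ deltaC t N :=
  div_nonneg (thetaC_pos ht N).le (by positivity)

/-- The exponent comparison showing that the terminal mean value of the iteration is admissible. -/
lemma terminal_bound_le {X θ δ l s : ℝ} {a b : ℕ} (hX : 1 ≤ X) (hθ : 0 ≤ θ) (hδ : 0 ≤ δ)
    (hδθ : δ ≤ θ / 2) (hs : 2 ≤ s) (hab : a < b) :
    ((X ^ θ) ^ (15 * (b - a))) ^ (2 * s / 3) *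
        ((X / (X ^ θ) ^ a) ^ (l + δ) * ((X ^ θ) ^ (b + 15 * (b - a) - a)) ^ (-s)) ≤
      ((X ^ θ) ^ (15 * (b - a))) ^ (-s / 4) * (X / (X ^ θ) ^ b) ^ (2 * s) *
        (X / (X ^ θ) ^ a) ^ (l - 2 * s) := by
  have hX0 : 0 < X := by linarith
  have hpow : ∀ n : ℕ, (X ^ θ) ^ n = X ^ (θ * n) := fun n => (Real.rpow_mul_natCast hX0.le θ n).symm
  have hdiv : ∀ n : ℕ, X / (X ^ θ) ^ n = X ^ (1 - θ * n) := fun n => by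
    rw [hpow, Real.rpow_sub hX0, Real.rpow_one]
  obtain ⟨d, rfl⟩ := Nat.exists_eq_add_of_lt hab
  rw [show a + d + 1 - a = d + 1 by omega, show a + d + 1 + 15 * (d + 1) - a = 16 * (d + 1) by omega]
  simp only [hdiv]
  simp only [hpow, ← Real.rpow_mul hX0.le, ← Real.rpow_add hX0]
  refine Real.rpow_le_rpow_of_exponent_le hX ?_
  push_cast
  have h1 : 2 ≤ s * (d + 1) := by nlinarith [(Nat.cast_nonneg d : (0 : ℝ) ≤ d)]
  have h2 := mul_le_mul_of_nonneg_left h1 hθ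
  have h3 : 0 ≤ θ * a * δ := by positivity
  nlinarith

/-- Lemma 4.2: for 1 ≤ a < b with H = 15(b-a) and b + H ≤ (2θ)⁻¹, there is an
integer 0 ≤ h < H with
I_{a,b}(X) ≤ C ((M^h)^{2s/3} K_{a,b+h}(X) + (M^H)^{-s/4} (X/M^b)^{2s} (X/M^a)^{λ-2s}). -/
theorem lemma4_2 (k r t : ℕ) (hk : 2 ≤ k)
    (ht1 : max 2 (((k : ℝ) - 1) / 2) ≤ (t : ℝ)) (ht2 : t ≤ k)
    (hr1 : 1 ≤ r) (hr2 : r ≤ k) (hrt : k ≤ r + t) :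
    ∃ N₀ : ℕ, ∀ N : ℕ, N₀ ≤ N →
    ∃ C : ℝ, 0 < C ∧ ∃ X₀ : ℝ, ∀ X : ℝ, X₀ ≤ X →
    (∀ Y : ℝ, X ^ ((1:ℝ)/2) ≤ Y →
        (Jcount (r*(t+1)) k Y : ℝ) < Y ^ (lamExp k (r*(t+1)) + deltaC t N)) →
    ∀ p : ℕ, p.Prime → Mval t N X < (p:ℝ) → (p:ℝ) ≤ 2 * Mval t N X →
    ∀ a b : ℕ, 1 ≤ a → a < b →
      (b:ℝ) + 15*((b:ℝ) - (a:ℝ)) ≤ (2 * thetaC t N)⁻¹ →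
    ∃ h : ℕ, h < 15*(b-a) ∧
      Imax k p r (r*t) X a b ≤
        C * ((Mval t N X ^ h) ^ (2*((r*t : ℕ):ℝ)/3) * Kmax k p r t X a (b+h)
          + (Mval t N X ^ (15*(b-a))) ^ (-((r*t : ℕ):ℝ)/4)
            * (X / Mval t N X ^ b) ^ (2*((r*t : ℕ):ℝ))
            * (X / Mval t N X ^ a) ^ (lamExp k (r*(t+1)) - 2*((r*t : ℕ):ℝ))) := by
  have ht : 2 ≤ t := by exact_mod_cast (le_max_left _ _).trans ht1
  obtain ⟨C₁, hC₁, hcond⟩ := exists_Imax_conditioning_const hr1 ht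
  refine ⟨1, fun N hN => ?_⟩
  have hθ := thetaC_pos ht N
  have hδ := deltaC_nonneg ht N
  have hδθ := deltaC_le ht hN
  set θ := thetaC t N 
  set δ := deltaC t N
  set l := lamExp k (r * (t + 1))
  set s : ℝ := ((r * t : ℕ) : ℝ) with hs
  have hs2 : 2 ≤ s := by
    rw [hs]
    exact_mod_cast (by nlinarith : 2 ≤ r * t)
  set B : ℕ := ⌈(2 * θ)⁻¹⌉₊
  set C₂ : ℝ := C₁ * 2 ^ (2 * s / 3) with hC₂def
  have hC₂ : 1 ≤ C₂ := one_le_mul_of_one_le_of_one_le hC₁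
    (Real.one_le_rpow (by norm_num) (by positivity))
  refine ⟨C₂ ^ B * (B + 2 * 2 ^ (l + δ)), by positivity, 1,
    fun X hX hJ p hprime hMp hpM a b ha hab hbH => ?_⟩
  have hp := hprime.pos
  have hX0 : 0 < X := by linarith
  have hM1 : 1 ≤ Mval t N X := Real.one_le_rpow hX hθ.le
  have hMX : Mval t N X = X ^ θ := rfl
  set M := Mval t N X
  have hM0 : 0 < M := by linarith
  set H := 15 * (b - a) with hH
  have hHcast : (H : ℝ) = 15 * ((b : ℝ) - a) := by
    rw [hH, Nat.cast_mul, Nat.cast_sub hab.le, Nat.cast_ofNat]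
  have hHB : H ≤ B := by
    have : (H : ℝ) ≤ B := by
      linarith [Nat.le_ceil (2 * θ)⁻¹, (Nat.cast_nonneg b : (0 : ℝ) ≤ b)]
    exact_mod_cast this
  have hMc : M ^ (b + H) ≤ X ^ ((1 : ℝ) / 2) := by
    rw [hMX, ← Real.rpow_mul_natCast hX0.le]
    refine Real.rpow_le_rpow_of_exponent_le hX ?_
    push_cast
    rw [hHcast]
    calc θ * (b + 15 * ((b : ℝ) - a)) ≤ θ * (2 * θ)⁻¹ := by gcongr
      _ = 1 / 2 := by field_simp
  have hq : ((p : ℝ) ^ ((1 : ℝ) / 3)) ^ (2 * (r * t)) ≤ 2 ^ (2 * s / 3) * M ^ (2 * s / 3) := by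
    rw [← Real.mul_rpow (by norm_num) hM0.le, ← Real.rpow_mul_natCast (Nat.cast_nonneg p),
      show (1 : ℝ) / 3 * ((2 * (r * t) : ℕ) : ℝ) = 2 * s / 3 by rw [hs]; push_cast; ring]
    gcongr
  have hrec : ∀ n, Imax k p r (r * t) X a (b + n) ≤ C₂ * (Kmax k p r t X a (b + n) +
      M ^ (2 * s / 3) * Imax k p r (r * t) X a (b + (n + 1))) := by
    intro n
    have hI := Imax_nonneg k p r (r * t) X a (b + (n + 1))
    have hK := Kmax_nonneg k p r t X ha (b + n)
    refine (hcond k p hp X a (b + n) ha (by omega) ((p : ℝ) ^ ((1 : ℝ) / 3)) (by positivity)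
      (by rw [← Real.rpow_mul_natCast (Nat.cast_nonneg p)]; norm_num)).trans ?_
    have h1 : (1 : ℝ) ≤ 2 ^ (2 * s / 3) := Real.one_le_rpow (by norm_num) (by positivity)
    rw [hC₂def, mul_assoc]
    refine mul_le_mul_of_nonneg_left ?_ (by linarith)
    rw [mul_add, ← mul_assoc (2 ^ (2 * s / 3) : ℝ)]
    exact add_le_add (le_mul_of_one_le_left hK h1) (mul_le_mul_of_nonneg_right hq hI)
  obtain ⟨h, hh, hbound⟩ := exists_le_of_iterated_recursion hC₂ (by positivity)
    (fun n => Kmax_nonneg k p r t X ha (b + n)) hrec (by omega : 0 < H)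
  refine ⟨h, hh, hbound.trans ?_⟩
  rw [Real.rpow_pow_comm hM0.le, Real.rpow_pow_comm hM0.le]
  have hK := Kmax_nonneg k p r t X ha (b + h)
  have hI := Imax_nonneg k p r (r * t) X a (b + H)
  have hend := Imax_le_of_Jcount_lt hX hM1 hMp (by omega : a ≤ b + H) hMc hJ
  have hterm := terminal_bound_le (l := l) hX hθ.le hδ hδθ hs2 hab
  rw [← hMX, ← hH] at hterm
  set T := (M ^ H) ^ (-s / 4) * (X / M ^ b) ^ (2 * s) * (X / M ^ a) ^ (l - 2 * s)
  set U := (M ^ h) ^ (2 * s / 3) * Kmax k p r t X a (b + h)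
  have hU : 0 ≤ U := by positivity
  have hT : 0 ≤ T := by positivity
  have hfinal : (M ^ H) ^ (2 * s / 3) * Imax k p r (r * t) X a (b + H) ≤
      2 * 2 ^ (l + δ) * T := by
    calc _ ≤ (M ^ H) ^ (2 * s / 3) *
          (2 * (2 * (X / M ^ a)) ^ (l + δ) * (M ^ (b + H - a)) ^ (-s)) := by gcongr
      _ = 2 * 2 ^ (l + δ) * ((M ^ H) ^ (2 * s / 3) *
          ((X / M ^ a) ^ (l + δ) * (M ^ (b + H - a)) ^ (-s))) := by
        rw [Real.mul_rpow (by norm_num) (by positivity)]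
        ring
      _ ≤ _ := by gcongr
  have hHB' : (H : ℝ) ≤ B := by exact_mod_cast hHB
  have hP : (0 : ℝ) ≤ 2 * 2 ^ (l + δ) := by positivity
  rw [mul_assoc]
  calc _ ≤ C₂ ^ B * (B * U + 2 * 2 ^ (l + δ) * T) := by gcongr
    _ ≤ _ := by
      gcongr
      nlinarith [mul_nonneg (Nat.cast_nonneg B : (0 : ℝ) ≤ B) hT, mul_nonneg hP hU]

end
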